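/- Let X ∈ ℝ^{d×n} have columns x₁,…,xₙ i.i.d. N(0, I_d). For S ⊆ [n] let X_S be the submatrix of columns indexed by S, and define the k-sparse spectral norm ‖X‖_sp(k) = max_{|S|≤k} ‖X_S‖_op. Then there is a universal constant C such that for every k ∈ [n] and β ∈ (0,1), with probability at least 1 − β, ‖X‖_sp(k) ≤ C(√d + √(k·log(en/k)) + √(log(1/β))). -/

import Mathlib

/-!
A moment argument in place of a net. Fix `S` with `#S = k` and put `Q(w) = ‖X_S w‖₂²` for
`w ∈ ℝ^S`. Since `Q (v + u) + Q (v - u) ≥ 2 Q v`, the function `exp (Q / 16)` is at most its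
average over any ball centred at the point considered, so for every `v` in the unit ball
`exp (Q v / 16) · vol (ball 0 1) ≤ ∫_{ball 0 2} exp (Q w / 16) dw`
(`SparseGaussian.mul_ball_le_lintegral`). The right side no longer depends on `v`, and by Tonelli
its expectation is at most `2 ^ d · vol (ball 0 2) = 2 ^ d · 2 ^ k · vol (ball 0 1)`, because
`E exp (Q w / 16) ≤ 2 ^ d` for `‖w‖ ≤ 2` (`SparseGaussian.lintegral_exp_quadForm`). Markov's
inequality gives `P (sup_v Q v ≥ T) ≤ 2 ^ (k + d) exp (-T / 16)`
(`SparseGaussian.measure_bad_le`).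

A union bound over the `n.choose k ≤ exp (k log (e n / k))` sets `S` finishes: with
`T = 36 (√d + √(k log (e n / k)) + √(log (1 / β)))²` the total probability is at most `β`,
since `k ≤ k log (e n / k)`.
-/

open MeasureTheory ProbabilityTheory

namespace SparseGaussian

open ENNReal

/-! ### Quadratic forms and extension by zero -/

/-- `quadForm a X = ‖∑ᵢ aᵢ Xᵢ‖₂²`, the squared Euclidean norm of the combination with
coefficients `a` of the columns `Xᵢ` of `X`. -/
noncomputable def quadForm {n d : ℕ} (a : Fin n → ℝ) (X : Fin n → Fin d → ℝ) : ℝ :=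
  ∑ j, (∑ i, a i * X i j) ^ 2

/-- Extension by zero of a vector indexed by `S` to a vector indexed by `Fin n`. -/
def extendZero {n : ℕ} (S : Finset (Fin n)) : EuclideanSpace ℝ S →ₗ[ℝ] (Fin n → ℝ) where
  toFun w i := if h : i ∈ S then w ⟨i, h⟩ else 0
  map_add' v w := by
    ext i
    by_cases h : i ∈ S <;> simp [h]
  map_smul' c w := by
    ext i
    by_cases h : i ∈ S <;> simp [h]

lemma sum_extendZero_sq {n : ℕ} (S : Finset (Fin n)) (w : EuclideanSpace ℝ S) :
    ∑ i, (extendZero S w i) ^ 2 = ‖w‖ ^ 2 := by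
  rw [EuclideanSpace.real_norm_sq_eq, ← Finset.sum_subset (Finset.subset_univ S),
    ← Finset.sum_coe_sort S]
  · simp [extendZero]
  · intro i _ h
    simp [extendZero, h]

/-! ### Gaussian integrals -/

lemma lintegral_pi_prod {ι : Type*} [Fintype ι] {E : ι → Type*} [∀ i, MeasurableSpace (E i)]
    (μ : ∀ i, Measure (E i)) [∀ i, IsProbabilityMeasure (μ i)] (f : ∀ i, E i → ℝ≥0∞)
    (hf : ∀ i, Measurable (f i)) :
    ∫⁻ x, ∏ i, f i (x i) ∂(Measure.pi μ) = ∏ i, ∫⁻ y, f i y ∂(μ i) := by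
  refine (lintegral_prod_eq_prod_lintegral_of_indepFun (μ := Measure.pi μ) Finset.univ
    (fun i x => f i (x i)) (iIndepFun_pi fun i => (hf i).aemeasurable)
    (fun i => (hf i).comp (measurable_pi_apply i))).trans ?_
  refine Finset.prod_congr rfl fun i _ => ?_
  exact (measurePreserving_eval μ i).lintegral_comp (hf i)

lemma lintegral_exp_mul_gaussian (c : ℝ) :
    ∫⁻ x, ENNReal.ofReal (Real.exp (c * x)) ∂(gaussianReal 0 1)
      = ENNReal.ofReal (Real.exp (c ^ 2 / 2)) := by
  rw [← ofReal_integral_eq_lintegral_ofReal (integrable_exp_mul_gaussianReal c)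
    (ae_of_all _ fun _ => (Real.exp_pos _).le)]
  congr 1
  have := congrFun (mgf_fun_id_gaussianReal (μ := 0) (v := 1)) c
  simpa [mgf] using this

lemma lintegral_exp_sq_gaussian {a : ℝ} (ha : a ≤ 1 / 4) :
    ∫⁻ x, ENNReal.ofReal (Real.exp (a * x ^ 2)) ∂(gaussianReal 0 1) ≤ 2 := by
  calc ∫⁻ x, ENNReal.ofReal (Real.exp (a * x ^ 2)) ∂(gaussianReal 0 1)
      ≤ ∫⁻ x, ENNReal.ofReal (Real.exp (1 / 4 * x ^ 2)) ∂(gaussianReal 0 1) := by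
        gcongr
    _ = ∫⁻ x, ENNReal.ofReal ((√(2 * Real.pi))⁻¹ * Real.exp (-(1 / 4) * x ^ 2)) := by
        rw [gaussianReal_of_var_ne_zero _ one_ne_zero, lintegral_withDensity_eq_lintegral_mul _
          (measurable_gaussianPDF 0 1) (by fun_prop)]
        refine lintegral_congr fun x => ?_
        rw [Pi.mul_apply, gaussianPDF, ← ENNReal.ofReal_mul (gaussianPDFReal_nonneg _ _ _),
          gaussianPDFReal, mul_assoc, ← Real.exp_add]
        congr 3
        · simp
        · simp
          ring
    _ = ENNReal.ofReal ((√(2 * Real.pi))⁻¹ * √(Real.pi / (1 / 4))) := by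
        rw [← ofReal_integral_eq_lintegral_ofReal
          ((integrable_exp_neg_mul_sq (by norm_num : (0 : ℝ) < 1 / 4)).const_mul _)
          (ae_of_all _ fun _ => by positivity), integral_const_mul, integral_gaussian]
    _ ≤ ENNReal.ofReal 2 := by
        refine ENNReal.ofReal_le_ofReal ?_
        have hp := Real.pi_pos
        rw [inv_mul_le_iff₀ (by positivity)]
        refine Real.sqrt_le_iff.2 ⟨by positivity, ?_⟩
        rw [mul_pow, Real.sq_sqrt (by positivity)]
        linarith
    _ = 2 := by simp

/-- The law of a standard Gaussian `d × n` matrix, given by its columns. -/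
noncomputable abbrev gaussianMatrix (n d : ℕ) : Measure (Fin n → Fin d → ℝ) :=
  Measure.pi fun _ : Fin n => Measure.pi fun _ : Fin d => gaussianReal 0 1

lemma lintegral_exp_linear_matrix {n d : ℕ} (c : Fin n → Fin d → ℝ) :
    ∫⁻ X, ENNReal.ofReal (Real.exp (∑ i, ∑ j, c i j * X i j)) ∂(gaussianMatrix n d)
      = ENNReal.ofReal (Real.exp (∑ i, ∑ j, (c i j) ^ 2 / 2)) := by
  have key : ∀ X : Fin n → Fin d → ℝ,
      ENNReal.ofReal (Real.exp (∑ i, ∑ j, c i j * X i j))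
        = ∏ i, ∏ j, ENNReal.ofReal (Real.exp (c i j * X i j)) := by
    intro X
    simp_rw [Real.exp_sum]
    rw [ENNReal.ofReal_prod_of_nonneg (fun i _ => by positivity)]
    refine Finset.prod_congr rfl fun i _ => ?_
    rw [ENNReal.ofReal_prod_of_nonneg (fun i _ => by positivity)]
  simp_rw [key]
  rw [lintegral_pi_prod _ (fun i (x : Fin d → ℝ) =>
    ∏ j, ENNReal.ofReal (Real.exp (c i j * x j))) (fun i => by fun_prop)]
  simp_rw [Real.exp_sum]
  rw [ENNReal.ofReal_prod_of_nonneg (fun i _ => by positivity)]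
  refine Finset.prod_congr rfl fun i _ => ?_
  rw [ENNReal.ofReal_prod_of_nonneg (fun i _ => by positivity),
    lintegral_pi_prod _ (fun j (x : ℝ) => ENNReal.ofReal (Real.exp (c i j * x)))
      (fun i => by fun_prop)]
  simp_rw [lintegral_exp_mul_gaussian]

/-- Exponential moment of `‖Xa‖₂²` for a fixed `a` with `‖a‖₂ ≤ 2`. An auxiliary standard
Gaussian vector `g` linearises the square, `exp (y² / 16) = E exp (√(1/8) g y)`, so that after
exchanging the integrals only one-dimensional Gaussian integrals remain. -/
lemma lintegral_exp_quadForm {n d : ℕ} (a : Fin n → ℝ) (ha : ∑ i, (a i) ^ 2 ≤ 4) :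
    ∫⁻ X, ENNReal.ofReal (Real.exp (quadForm a X / 16)) ∂(gaussianMatrix n d) ≤ 2 ^ d := by
  set s : ℝ := √(1 / 8) with hs
  have hs2 : s ^ 2 = 1 / 8 := Real.sq_sqrt (by norm_num)
  have lin : ∀ X : Fin n → Fin d → ℝ, ENNReal.ofReal (Real.exp (quadForm a X / 16))
      = ∫⁻ g, ENNReal.ofReal (Real.exp (∑ i, ∑ j, s * a i * g j * X i j))
          ∂(Measure.pi fun _ : Fin d => gaussianReal 0 1) := by
    intro X
    have h1 : ∀ g : Fin d → ℝ, ENNReal.ofReal (Real.exp (∑ i, ∑ j, s * a i * g j * X i j))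
        = ∏ j, ENNReal.ofReal (Real.exp ((s * ∑ i, a i * X i j) * g j)) := by
      intro g
      rw [Finset.sum_comm, Real.exp_sum,
        ENNReal.ofReal_prod_of_nonneg (fun i _ => by positivity)]
      refine Finset.prod_congr rfl fun j _ => ?_
      rw [Finset.mul_sum, Finset.sum_mul]
      congr 2
      exact Finset.sum_congr rfl fun i _ => by ring
    simp_rw [h1]
    rw [lintegral_pi_prod _ (fun j (x : ℝ) =>
      ENNReal.ofReal (Real.exp ((s * ∑ i, a i * X i j) * x))) (fun i => by fun_prop)]
    simp_rw [lintegral_exp_mul_gaussian]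
    rw [quadForm, Finset.sum_div, Real.exp_sum,
      ENNReal.ofReal_prod_of_nonneg (fun i _ => by positivity)]
    refine Finset.prod_congr rfl fun j _ => ?_
    rw [mul_pow, hs2]
    congr 2
    ring
  simp_rw [lin]
  rw [lintegral_lintegral_swap (by unfold Function.uncurry; fun_prop)]
  simp_rw [lintegral_exp_linear_matrix (fun i j => s * a i * _)]
  have h2 : ∀ g : Fin d → ℝ,
      ENNReal.ofReal (Real.exp (∑ i, ∑ j, (s * a i * g j) ^ 2 / 2))
        = ∏ j, ENNReal.ofReal (Real.exp (((∑ i, (a i) ^ 2) / 16) * (g j) ^ 2)) := by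
    intro g
    rw [Finset.sum_comm, Real.exp_sum,
        ENNReal.ofReal_prod_of_nonneg (fun i _ => by positivity)]
    refine Finset.prod_congr rfl fun j _ => ?_
    rw [Finset.sum_div, Finset.sum_mul]
    congr 2
    refine Finset.sum_congr rfl fun i _ => ?_
    rw [mul_pow, mul_pow, hs2]
    ring
  simp_rw [h2]
  rw [lintegral_pi_prod _ (fun j (x : ℝ) =>
      ENNReal.ofReal (Real.exp (((∑ i, (a i) ^ 2) / 16) * x ^ 2))) (fun i => by fun_prop)]
  calc _ ≤ ∏ _j : Fin d, (2 : ℝ≥0∞) :=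
        Finset.prod_le_prod' fun j _ => lintegral_exp_sq_gaussian (by linarith)
    _ = 2 ^ d := by simp

/-! ### Averaging over balls -/

/-- A function midpoint-convex about a point `v` of the unit ball is at `v` at most its average
over `ball v 1`, and that ball lies inside `ball 0 2`. -/
lemma mul_ball_le_lintegral {E : Type*} [NormedAddCommGroup E] [MeasurableSpace E] [BorelSpace E]
    [SecondCountableTopology E]
    (μ : Measure E) [μ.IsAddLeftInvariant] [μ.IsNegInvariant] (f : E → ℝ≥0∞) (hf : Measurable f)
    (v : E) (hv : ‖v‖ ≤ 1) (hc : ∀ u, 2 * f v ≤ f (v + u) + f (v - u)) :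
    f v * μ (Metric.ball 0 1) ≤ ∫⁻ w in Metric.ball 0 2, f w ∂μ := by
  have hB : MeasurableSet (Metric.ball (0 : E) 2) := measurableSet_ball
  set F : E → ℝ≥0∞ := (Metric.ball (0 : E) 2).indicator f with hF
  have hplus : ∫⁻ u in Metric.ball 0 1, f (v + u) ∂μ ≤ ∫⁻ w in Metric.ball 0 2, f w ∂μ := by
    rw [← lintegral_indicator hB, ← lintegral_add_left_eq_self F v]
    refine le_trans (setLIntegral_mono' measurableSet_ball fun u hu => ?_)
      (setLIntegral_le_lintegral (Metric.ball 0 1) _)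
    rw [hF, Set.indicator_of_mem]
    have := norm_add_le v u
    simp only [Metric.mem_ball, dist_zero_right] at hu ⊢
    linarith
  have hminus : ∫⁻ u in Metric.ball 0 1, f (v - u) ∂μ ≤ ∫⁻ w in Metric.ball 0 2, f w ∂μ := by
    rw [← lintegral_indicator hB, ← lintegral_sub_left_eq_self F v]
    refine le_trans (setLIntegral_mono' measurableSet_ball fun u hu => ?_)
      (setLIntegral_le_lintegral (Metric.ball 0 1) _)
    rw [hF, Set.indicator_of_mem]
    have := norm_sub_le v u
    simp only [Metric.mem_ball, dist_zero_right] at hu ⊢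
    linarith
  have h2 : 2 * (f v * μ (Metric.ball 0 1)) ≤ 2 * ∫⁻ w in Metric.ball 0 2, f w ∂μ := by
    calc 2 * (f v * μ (Metric.ball 0 1))
        = ∫⁻ _u in Metric.ball 0 1, 2 * f v ∂μ := by rw [setLIntegral_const, mul_assoc]
      _ ≤ ∫⁻ u in Metric.ball 0 1, (f (v + u) + f (v - u)) ∂μ := lintegral_mono fun u => hc u
      _ = ∫⁻ u in Metric.ball 0 1, f (v + u) ∂μ + ∫⁻ u in Metric.ball 0 1, f (v - u) ∂μ :=
          lintegral_add_left (by fun_prop) _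
      _ ≤ _ := by rw [two_mul]; exact add_le_add hplus hminus
  exact (ENNReal.mul_le_mul_iff_right two_ne_zero ofNat_ne_top).1 h2

lemma two_mul_exp_quadForm_le {n d : ℕ} (a b : Fin n → ℝ) (X : Fin n → Fin d → ℝ) :
    2 * Real.exp (quadForm a X / 16)
      ≤ Real.exp (quadForm (a + b) X / 16) + Real.exp (quadForm (a - b) X / 16) := by
  have hpar : quadForm (a + b) X + quadForm (a - b) X = 2 * quadForm a X + 2 * quadForm b X := by
    simp only [quadForm, Finset.mul_sum, ← Finset.sum_add_distrib]
    refine Finset.sum_congr rfl fun j _ => ?_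
    simp only [Pi.add_apply, Pi.sub_apply, add_mul, sub_mul, Finset.sum_add_distrib,
      Finset.sum_sub_distrib]
    ring
  have hb : 0 ≤ quadForm b X := Finset.sum_nonneg fun j _ => sq_nonneg _
  set p := quadForm (a + b) X / 16 with hp
  set q := quadForm (a - b) X / 16 with hq
  have h1 : Real.exp (quadForm a X / 16) ≤ Real.exp (p / 2) * Real.exp (q / 2) := by
    rw [← Real.exp_add]
    exact Real.exp_le_exp.2 (by linarith)
  have h2 : Real.exp p = Real.exp (p / 2) ^ 2 := by rw [← Real.exp_nat_mul]; congr 1; push_cast; ring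
  have h3 : Real.exp q = Real.exp (q / 2) ^ 2 := by rw [← Real.exp_nat_mul]; congr 1; push_cast; ring
  nlinarith [sq_nonneg (Real.exp (p / 2) - Real.exp (q / 2))]

/-! ### Tail bound for a fixed support -/

lemma measurable_exp_quadForm {n d : ℕ} (S : Finset (Fin n)) :
    Measurable (fun p : (Fin n → Fin d → ℝ) × EuclideanSpace ℝ S =>
      ENNReal.ofReal (Real.exp (quadForm (extendZero S p.2) p.1 / 16))) := by
  have hcont : Continuous (extendZero S) := LinearMap.continuous_of_finiteDimensional _
  have : Continuous (fun p : (Fin n → Fin d → ℝ) × EuclideanSpace ℝ S =>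
      Real.exp (quadForm (extendZero S p.2) p.1 / 16)) := by
    unfold quadForm
    fun_prop
  exact this.measurable.ennreal_ofReal

/-- `ballIntegral S X = ∫_{‖w‖ < 2} exp (‖X_S w‖₂² / 16) dw`, the integral being over `ℝ^S`. -/
noncomputable def ballIntegral {n d : ℕ} (S : Finset (Fin n)) (X : Fin n → Fin d → ℝ) : ℝ≥0∞ :=
  ∫⁻ w in Metric.ball (0 : EuclideanSpace ℝ S) 2,
    ENNReal.ofReal (Real.exp (quadForm (extendZero S w) X / 16))

lemma measurable_ballIntegral {n d : ℕ} (S : Finset (Fin n)) :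
    Measurable (ballIntegral (d := d) S) :=
  (measurable_exp_quadForm S).lintegral_prod_right'

lemma lintegral_ballIntegral_le {n d : ℕ} (S : Finset (Fin n)) :
    ∫⁻ X, ballIntegral S X ∂(gaussianMatrix n d)
      ≤ 2 ^ d * (2 ^ S.card * volume (Metric.ball (0 : EuclideanSpace ℝ S) 1)) := by
  unfold ballIntegral
  rw [lintegral_lintegral_swap (measurable_exp_quadForm S).aemeasurable]
  calc _ ≤ ∫⁻ _w in Metric.ball (0 : EuclideanSpace ℝ S) 2, (2 : ℝ≥0∞) ^ d := by
        refine setLIntegral_mono' measurableSet_ball fun w hw => lintegral_exp_quadForm _ ?_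
        rw [sum_extendZero_sq]
        simp only [Metric.mem_ball, dist_zero_right] at hw
        nlinarith [norm_nonneg w]
    _ = 2 ^ d * (2 ^ S.card * volume (Metric.ball (0 : EuclideanSpace ℝ S) 1)) := by
        rw [setLIntegral_const, Measure.addHaar_ball_of_pos _ _ zero_lt_two,
          finrank_euclideanSpace, Fintype.card_coe, ENNReal.ofReal_pow zero_le_two,
          ENNReal.ofReal_ofNat]

lemma measurable_exp_quadForm_right {n d : ℕ} (S : Finset (Fin n)) (X : Fin n → Fin d → ℝ) :
    Measurable fun w : EuclideanSpace ℝ S =>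
      ENNReal.ofReal (Real.exp (quadForm (extendZero S w) X / 16)) := by
  have hcont : Continuous (extendZero S) := LinearMap.continuous_of_finiteDimensional _
  unfold quadForm
  fun_prop

lemma two_mul_ofReal_exp_quadForm_le {n d : ℕ} (S : Finset (Fin n)) (v u : EuclideanSpace ℝ S)
    (X : Fin n → Fin d → ℝ) :
    2 * ENNReal.ofReal (Real.exp (quadForm (extendZero S v) X / 16))
      ≤ ENNReal.ofReal (Real.exp (quadForm (extendZero S (v + u)) X / 16))
        + ENNReal.ofReal (Real.exp (quadForm (extendZero S (v - u)) X / 16)) := by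
  have h := ENNReal.ofReal_le_ofReal (two_mul_exp_quadForm_le (extendZero S v) (extendZero S u) X)
  rw [ENNReal.ofReal_add (Real.exp_pos _).le (Real.exp_pos _).le,
    ENNReal.ofReal_mul zero_le_two, ENNReal.ofReal_ofNat] at h
  rwa [map_add, map_sub]

lemma mul_volume_ball_le {n : ℕ} (S : Finset (Fin n)) (f : EuclideanSpace ℝ S → ℝ≥0∞)
    (hf : Measurable f) (v : EuclideanSpace ℝ S) (hv : ‖v‖ ≤ 1)
    (hc : ∀ u, 2 * f v ≤ f (v + u) + f (v - u)) :
    f v * volume (Metric.ball (0 : EuclideanSpace ℝ S) 1)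
      ≤ ∫⁻ w in Metric.ball (0 : EuclideanSpace ℝ S) 2, f w :=
  mul_ball_le_lintegral volume f hf v hv hc

lemma exp_mul_volume_le_ballIntegral {n d : ℕ} (S : Finset (Fin n)) (X : Fin n → Fin d → ℝ)
    (v : EuclideanSpace ℝ S) (hv : ‖v‖ ≤ 1) :
    ENNReal.ofReal (Real.exp (quadForm (extendZero S v) X / 16))
        * volume (Metric.ball (0 : EuclideanSpace ℝ S) 1) ≤ ballIntegral S X :=
  mul_volume_ball_le S
    (fun w => ENNReal.ofReal (Real.exp (quadForm (extendZero S w) X / 16)))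
    (measurable_exp_quadForm_right S X) v hv fun u => two_mul_ofReal_exp_quadForm_le S v u X

/-- Tail bound for the operator norm of the submatrix with columns in a fixed set `S`. The
volume of the unit ball cancels against that of the ball of radius `2`, leaving `2 ^ #S`. -/
lemma measure_bad_le {n d : ℕ} (S : Finset (Fin n)) (T : ℝ) :
    gaussianMatrix n d {X | ∃ v : EuclideanSpace ℝ S, ‖v‖ ≤ 1 ∧ T ≤ quadForm (extendZero S v) X}
      ≤ 2 ^ S.card * 2 ^ d / ENNReal.ofReal (Real.exp (T / 16)) := by
  have hV0 : volume (Metric.ball (0 : EuclideanSpace ℝ S) 1) ≠ 0 :=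
    (Metric.measure_ball_pos volume _ one_pos).ne'
  have hVt : volume (Metric.ball (0 : EuclideanSpace ℝ S) 1) ≠ ∞ := measure_ball_lt_top.ne
  have hle := lintegral_ballIntegral_le (d := d) S
  have hpt := exp_mul_volume_le_ballIntegral (d := d) S
  generalize volume (Metric.ball (0 : EuclideanSpace ℝ S) 1) = V at *
  have hε0 : ENNReal.ofReal (Real.exp (T / 16)) ≠ 0 :=
    (ENNReal.ofReal_pos.2 (Real.exp_pos _)).ne'
  have hεt : ENNReal.ofReal (Real.exp (T / 16)) ≠ ∞ := ofReal_ne_top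
  have hsub : {X : Fin n → Fin d → ℝ |
        ∃ v : EuclideanSpace ℝ S, ‖v‖ ≤ 1 ∧ T ≤ quadForm (extendZero S v) X}
      ⊆ {X | ENNReal.ofReal (Real.exp (T / 16)) * V ≤ ballIntegral S X} := by
    rintro X ⟨v, hv, hT⟩
    refine le_trans ?_ (hpt X v hv)
    gcongr
  refine (measure_mono hsub).trans ((meas_ge_le_lintegral_div
    (measurable_ballIntegral S).aemeasurable (mul_ne_zero hε0 hV0) (mul_ne_top hεt hVt)).trans ?_)
  refine (ENNReal.div_le_div_right hle _).trans (le_of_eq ?_)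
  rw [← mul_assoc, ENNReal.mul_div_mul_right _ _ hV0 hVt, mul_comm (2 ^ d : ℝ≥0∞)]

/-! ### Counting supports and the union bound -/

lemma choose_le_exp {n k : ℕ} (hk : 1 ≤ k) (hkn : k ≤ n) :
    (n.choose k : ℝ) ≤ Real.exp (k * Real.log (Real.exp 1 * n / k)) := by
  have hk0 : (0 : ℝ) < k := by exact_mod_cast hk
  have hn0 : (0 : ℝ) < n := by exact_mod_cast hk.trans hkn
  rw [Real.exp_nat_mul, Real.exp_log (by positivity)]
  refine (Nat.choose_le_pow_div k n).trans ?_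
  have h := Real.pow_div_factorial_le_exp (x := k) hk0.le k
  have h1 : Real.exp (k : ℝ) = Real.exp 1 ^ k := by rw [← Real.exp_nat_mul, mul_one]
  rw [h1, div_le_iff₀ (by positivity)] at h
  rw [div_pow, mul_pow, div_le_div_iff₀ (by positivity) (by positivity)]
  calc (n : ℝ) ^ k * (k : ℝ) ^ k ≤ n ^ k * (Real.exp 1 ^ k * k.factorial) := by gcongr
    _ = _ := by ring

end SparseGaussian

open SparseGaussian in
/-- Sparse spectral norm of Gaussian matrices: there is a universal constant
`C` such that for a `d × n` matrix `X` with i.i.d. standard Gaussian columns,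
with probability at least `1 - β`, for every subset `S` of at most `k`
columns and every unit vector `v` supported on `S`,
`‖Xv‖₂ ≤ C(√d + √(k·log(en/k)) + √(log(1/β)))`. -/
theorem sparse_spectral_norm_gaussian :
    ∃ C : ℝ, 0 < C ∧
      ∀ (d n k : ℕ) (β : ℝ), 1 ≤ k → k ≤ n → 0 < β → β < 1 →
        (Measure.pi fun _ : Fin n => Measure.pi fun _ : Fin d => gaussianReal 0 1)
          {X : Fin n → Fin d → ℝ |
            ∀ S : Finset (Fin n), S.card ≤ k →
              ∀ v : Fin n → ℝ, (∀ i ∉ S, v i = 0) → (∑ i, (v i) ^ 2) ≤ 1 →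
                Real.sqrt (∑ j, (∑ i, v i * X i j) ^ 2)
                  ≤ C * (Real.sqrt d
                      + Real.sqrt (k * Real.log (Real.exp 1 * n / k))
                      + Real.sqrt (Real.log (1 / β)))}
          ≥ ENNReal.ofReal (1 - β) := by
  refine ⟨6, by norm_num, fun d n k β hk hkn hβ hβ1 => ?_⟩
  have hk0 : (0 : ℝ) < k := by exact_mod_cast hk
  have hn0 : (0 : ℝ) < n := by exact_mod_cast hk.trans hkn
  have hkn' : (k : ℝ) ≤ n := by exact_mod_cast hkn
  set L : ℝ := k * Real.log (Real.exp 1 * n / k) with hL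
  set l : ℝ := Real.log (1 / β) with hl
  have hl0 : 0 ≤ l := Real.log_nonneg (by rw [le_div_iff₀ hβ]; linarith)
  have hkL : (k : ℝ) ≤ L := by
    have : 1 ≤ Real.log (Real.exp 1 * n / k) := by
      rw [Real.le_log_iff_exp_le (by positivity), mul_div_assoc]
      exact le_mul_of_one_le_right (Real.exp_pos _).le ((one_le_div hk0).2 hkn')
    nlinarith
  set R : ℝ := 6 * (√d + √L + √l) with hR
  have hR0 : 0 ≤ R := by positivity
  have hR2 : 36 * (d + L + l) ≤ R ^ 2 := by
    have h1 := Real.sq_sqrt (Nat.cast_nonneg (α := ℝ) d)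
    have h2 := Real.sq_sqrt (hk0.le.trans hkL)
    have h3 := Real.sq_sqrt hl0
    have := mul_nonneg (Real.sqrt_nonneg d) (Real.sqrt_nonneg L)
    have := mul_nonneg (Real.sqrt_nonneg d) (Real.sqrt_nonneg l)
    have := mul_nonneg (Real.sqrt_nonneg L) (Real.sqrt_nonneg l)
    rw [hR]
    nlinarith
  set good := {X : Fin n → Fin d → ℝ | ∀ S : Finset (Fin n), S.card ≤ k →
    ∀ v : Fin n → ℝ, (∀ i ∉ S, v i = 0) → (∑ i, (v i) ^ 2) ≤ 1 →
      √(∑ j, (∑ i, v i * X i j) ^ 2) ≤ R} with hgood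
  set bad : Finset (Fin n) → Set (Fin n → Fin d → ℝ) := fun S =>
    {X | ∃ v : EuclideanSpace ℝ S, ‖v‖ ≤ 1 ∧ R ^ 2 ≤ quadForm (extendZero S v) X} with hbad
  have hcover : Set.univ ⊆ good ∪ ⋃ S ∈ Finset.powersetCard k (Finset.univ : Finset (Fin n)),
      bad S := by
    intro X _
    by_cases hX : X ∈ good
    · exact Or.inl hX
    right
    simp only [hgood, Set.mem_ofPred_eq, not_forall, not_le] at hX
    obtain ⟨S, hS, v, hvS, hv, hlt⟩ := hX
    -- It suffices to look at supports of size exactly `k`.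
    obtain ⟨S', hSS', hS'⟩ := Finset.exists_superset_card_eq hS (by simpa using hkn)
    have hext : extendZero S' (WithLp.toLp 2 fun i : S' => v i) = v := by
      ext i
      by_cases h : i ∈ S'
      · simp [extendZero, h]
      · simp [extendZero, h, hvS i fun h' => h (hSS' h')]
    simp only [Set.mem_iUnion, Finset.mem_powersetCard]
    refine ⟨S', ⟨Finset.subset_univ _, hS'⟩, WithLp.toLp 2 fun i : S' => v i, ?_, ?_⟩
    · have := sum_extendZero_sq S' (WithLp.toLp 2 fun i : S' => v i)
      rw [hext] at this
      rw [← abs_of_nonneg (norm_nonneg _), ← sq_le_one_iff_abs_le_one]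
      linarith
    · rw [hext]
      exact ((Real.lt_sqrt hR0).1 hlt).le
  have hbound : gaussianMatrix n d (⋃ S ∈ Finset.powersetCard k (Finset.univ : Finset (Fin n)),
      bad S) ≤ ENNReal.ofReal β := by
    refine (measure_biUnion_finset_le _ _).trans ?_
    calc _ ≤ ∑ _S ∈ Finset.powersetCard k (Finset.univ : Finset (Fin n)),
          (2 : ENNReal) ^ k * 2 ^ d / ENNReal.ofReal (Real.exp (R ^ 2 / 16)) := by
          refine Finset.sum_le_sum fun S hS => ?_
          have := measure_bad_le (d := d) S (R ^ 2)
          rwa [(Finset.mem_powersetCard.1 hS).2] at this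
      _ = ENNReal.ofReal (n.choose k * (2 ^ k * 2 ^ d / Real.exp (R ^ 2 / 16))) := by
          rw [Finset.sum_const, Finset.card_powersetCard, Finset.card_univ, Fintype.card_fin,
            nsmul_eq_mul, ENNReal.ofReal_mul (by positivity),
            ENNReal.ofReal_div_of_pos (Real.exp_pos _), ENNReal.ofReal_mul (by positivity),
            ENNReal.ofReal_pow zero_le_two, ENNReal.ofReal_pow zero_le_two]
          simp
      _ ≤ ENNReal.ofReal β := by
          refine ENNReal.ofReal_le_ofReal ?_
          have h2 : (2 : ℝ) ≤ Real.exp 1 := by linarith [Real.add_one_le_exp 1]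
          have hpow : ∀ m : ℕ, (2 : ℝ) ^ m ≤ Real.exp m := fun m => by
            rw [← mul_one (m : ℝ), Real.exp_nat_mul]
            gcongr
          have hβl : β = Real.exp (-l) := by
            rw [hl, one_div, Real.log_inv, neg_neg, Real.exp_log hβ]
          calc (n.choose k : ℝ) * (2 ^ k * 2 ^ d / Real.exp (R ^ 2 / 16))
              ≤ Real.exp L * (Real.exp k * Real.exp d / Real.exp (R ^ 2 / 16)) := by
                gcongr
                · exact choose_le_exp hk hkn
                · exact hpow k
                · exact hpow d
            _ = Real.exp (L + (k + d - R ^ 2 / 16)) := by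
                rw [Real.exp_add, Real.exp_sub, Real.exp_add]
            _ ≤ Real.exp (-l) := by
                refine Real.exp_le_exp.2 ?_
                have : (0 : ℝ) ≤ d := Nat.cast_nonneg d
                linarith
            _ = β := hβl.symm
  have htotal : 1 ≤ gaussianMatrix n d good + ENNReal.ofReal β := by
    calc (1 : ENNReal) = gaussianMatrix n d Set.univ := measure_univ.symm
      _ ≤ _ := (measure_mono hcover).trans (measure_union_le _ _)
      _ ≤ _ := by gcongr
  rw [ge_iff_le, ENNReal.ofReal_sub _ hβ.le, ENNReal.ofReal_one]
  exact tsub_le_iff_right.2 htotal
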